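/- Let β > 0 and let u, v, ũ, ṽ, f : ℝ³ → ℝ be infinitely differentiable functions of (t,x,y). Assume at every point: ∂_y ũ > 0 and ∂ₜu + ũ ∂ₓu + ṽ ∂_y u + u ∂ₓũ + v ∂_y ũ − ∂_y∂_y u = f. Define η := ∂_y∂_y ũ / ∂_y ũ, w := ∂_y( u/∂_y ũ ), f̃ := f/∂_y ũ, ζ := ( (∂ₜ + ũ ∂ₓ + ṽ ∂_y − ∂_y∂_y)(∂_y ũ) ) / ∂_y ũ, and ζ̃ := ( ∂_y∂_y∂ₜũ + ũ ∂_y∂_y∂ₓũ − η( ∂_y∂ₜũ + ũ ∂_y∂ₓũ ) ) / ∂_y ũ. Assume in addition that for all (t,x): v(t,x,0) = 0, ṽ(t,x,0) = 0, ∂_y u(t,x,0) = β u(t,x,0), and β − η(t,x,0) > 0. Then for all (t,x), at y = 0: (i) w = (u/∂_y ũ)(β − η), and (ii) ∂ₜw + ∂ₓ(ũ w) − (β − η)( ∂_y w + 2 η w + f̃ ) + ζ w + ( ζ̃/(β − η) ) w = 0. -/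

import Mathlib

/-- Partial derivative in the time variable of a function of `(t,x,y)`. -/
noncomputable def Dt3 (f : ℝ → ℝ → ℝ → ℝ) : ℝ → ℝ → ℝ → ℝ :=
  fun t x y => deriv (fun τ => f τ x y) t

/-- Partial derivative in the tangential variable of a function of `(t,x,y)`. -/
noncomputable def Dx3 (f : ℝ → ℝ → ℝ → ℝ) : ℝ → ℝ → ℝ → ℝ :=
  fun t x y => deriv (fun ξ => f t ξ y) x

/-- Partial derivative in the normal variable of a function of `(t,x,y)`. -/
noncomputable def Dy3 (f : ℝ → ℝ → ℝ → ℝ) : ℝ → ℝ → ℝ → ℝ :=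
  fun t x y => deriv (fun z => f t x z) y

/-- Smoothness of a curried function of three variables. -/
def Sm3 (f : ℝ → ℝ → ℝ → ℝ) : Prop :=
  ContDiff ℝ (⊤ : ℕ∞) (fun p : ℝ × ℝ × ℝ => f p.1 p.2.1 p.2.2)

theorem Sm3.diff {f : ℝ → ℝ → ℝ → ℝ} (hf : Sm3 f) (p : ℝ × ℝ × ℝ) :
    HasFDerivAt (fun p : ℝ × ℝ × ℝ => f p.1 p.2.1 p.2.2)
      (fderiv ℝ (fun p : ℝ × ℝ × ℝ => f p.1 p.2.1 p.2.2) p) p :=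
  ((ContDiff.differentiable hf (by simp)) p).hasFDerivAt

theorem Sm3.ht' {f : ℝ → ℝ → ℝ → ℝ} (hf : Sm3 f) (t x y : ℝ) :
    HasDerivAt (fun τ => f τ x y)
      (fderiv ℝ (fun p : ℝ × ℝ × ℝ => f p.1 p.2.1 p.2.2) (t, x, y) (1, 0, 0)) t := by
  have h : HasDerivAt (fun τ : ℝ => ((τ, x, y) : ℝ × ℝ × ℝ)) (1, 0, 0) t :=
    (hasDerivAt_id t).prodMk ((hasDerivAt_const t x).prodMk (hasDerivAt_const t y))
  exact HasFDerivAt.comp_hasDerivAt (f := fun τ : ℝ => ((τ, x, y) : ℝ × ℝ × ℝ)) t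
    (hf.diff (t, x, y)) h

theorem Sm3.hx' {f : ℝ → ℝ → ℝ → ℝ} (hf : Sm3 f) (t x y : ℝ) :
    HasDerivAt (fun ξ => f t ξ y)
      (fderiv ℝ (fun p : ℝ × ℝ × ℝ => f p.1 p.2.1 p.2.2) (t, x, y) (0, 1, 0)) x := by
  have h : HasDerivAt (fun τ : ℝ => ((t, τ, y) : ℝ × ℝ × ℝ)) (0, 1, 0) x :=
    (hasDerivAt_const x t).prodMk ((hasDerivAt_id x).prodMk (hasDerivAt_const x y))
  exact HasFDerivAt.comp_hasDerivAt (f := fun τ : ℝ => ((t, τ, y) : ℝ × ℝ × ℝ)) x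
    (hf.diff (t, x, y)) h

theorem Sm3.hy' {f : ℝ → ℝ → ℝ → ℝ} (hf : Sm3 f) (t x y : ℝ) :
    HasDerivAt (fun z => f t x z)
      (fderiv ℝ (fun p : ℝ × ℝ × ℝ => f p.1 p.2.1 p.2.2) (t, x, y) (0, 0, 1)) y := by
  have h : HasDerivAt (fun τ : ℝ => ((t, x, τ) : ℝ × ℝ × ℝ)) (0, 0, 1) y :=
    (hasDerivAt_const y t).prodMk ((hasDerivAt_const y x).prodMk (hasDerivAt_id y))
  exact HasFDerivAt.comp_hasDerivAt (f := fun τ : ℝ => ((t, x, τ) : ℝ × ℝ × ℝ)) y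
    (hf.diff (t, x, y)) h

theorem Sm3.ht {f : ℝ → ℝ → ℝ → ℝ} (hf : Sm3 f) (t x y : ℝ) :
    HasDerivAt (fun τ => f τ x y) (Dt3 f t x y) t :=
  (hf.ht' t x y).differentiableAt.hasDerivAt

theorem Sm3.hx {f : ℝ → ℝ → ℝ → ℝ} (hf : Sm3 f) (t x y : ℝ) :
    HasDerivAt (fun τ => f t τ y) (Dx3 f t x y) x :=
  (hf.hx' t x y).differentiableAt.hasDerivAt

theorem Sm3.hy {f : ℝ → ℝ → ℝ → ℝ} (hf : Sm3 f) (t x y : ℝ) :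
    HasDerivAt (fun τ => f t x τ) (Dy3 f t x y) y :=
  (hf.hy' t x y).differentiableAt.hasDerivAt

theorem Sm3.dir {F : ℝ × ℝ × ℝ → ℝ} (hF : ContDiff ℝ (⊤ : ℕ∞) F) (a : ℝ × ℝ × ℝ) :
    ContDiff ℝ (⊤ : ℕ∞) (fun p => fderiv ℝ F p a) :=
  (hF.fderiv_right (m := (⊤ : ℕ∞)) (by simp)).clm_apply contDiff_const

theorem Sm3.et {f : ℝ → ℝ → ℝ → ℝ} (hf : Sm3 f) :
    (fun p : ℝ × ℝ × ℝ => Dt3 f p.1 p.2.1 p.2.2) =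
    fun p => fderiv ℝ (fun p : ℝ × ℝ × ℝ => f p.1 p.2.1 p.2.2) p (1, 0, 0) :=
  funext fun p => (hf.ht' p.1 p.2.1 p.2.2).deriv

theorem Sm3.ex {f : ℝ → ℝ → ℝ → ℝ} (hf : Sm3 f) :
    (fun p : ℝ × ℝ × ℝ => Dx3 f p.1 p.2.1 p.2.2) =
    fun p => fderiv ℝ (fun p : ℝ × ℝ × ℝ => f p.1 p.2.1 p.2.2) p (0, 1, 0) :=
  funext fun p => (hf.hx' p.1 p.2.1 p.2.2).deriv

theorem Sm3.ey {f : ℝ → ℝ → ℝ → ℝ} (hf : Sm3 f) :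
    (fun p : ℝ × ℝ × ℝ => Dy3 f p.1 p.2.1 p.2.2) =
    fun p => fderiv ℝ (fun p : ℝ × ℝ × ℝ => f p.1 p.2.1 p.2.2) p (0, 0, 1) :=
  funext fun p => (hf.hy' p.1 p.2.1 p.2.2).deriv

theorem Sm3.st {f : ℝ → ℝ → ℝ → ℝ} (hf : Sm3 f) : Sm3 (Dt3 f) := by
  unfold Sm3; rw [hf.et]; exact Sm3.dir hf _

theorem Sm3.sx {f : ℝ → ℝ → ℝ → ℝ} (hf : Sm3 f) : Sm3 (Dx3 f) := by
  unfold Sm3; rw [hf.ex]; exact Sm3.dir hf _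

theorem Sm3.sy {f : ℝ → ℝ → ℝ → ℝ} (hf : Sm3 f) : Sm3 (Dy3 f) := by
  unfold Sm3; rw [hf.ey]; exact Sm3.dir hf _

theorem Sm3.symm {F : ℝ × ℝ × ℝ → ℝ} (hF : ContDiff ℝ (⊤ : ℕ∞) F) (a b p : ℝ × ℝ × ℝ) :
    fderiv ℝ (fun p => fderiv ℝ F p a) p b = fderiv ℝ (fun p => fderiv ℝ F p b) p a := by
  have hd : DifferentiableAt ℝ (fderiv ℝ F) p :=
    (hF.fderiv_right (m := (⊤ : ℕ∞)) (by simp)).differentiable (by simp) p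
  have hs : IsSymmSndFDerivAt ℝ F p :=
    hF.contDiffAt.isSymmSndFDerivAt (by
      rw [minSmoothness_of_isRCLikeNormedField]
      exact WithTop.coe_le_coe.2 (le_top : (2 : ℕ∞) ≤ ⊤))
  have key : ∀ c d : ℝ × ℝ × ℝ,
      fderiv ℝ (fun p => fderiv ℝ F p c) p d = fderiv ℝ (fderiv ℝ F) p d c := by
    intro c d
    rw [fderiv_clm_apply hd (differentiableAt_const c)]
    simp
  rw [key, key]
  exact hs.eq b a

theorem Sm3.comm_t {f : ℝ → ℝ → ℝ → ℝ} (hf : Sm3 f) : Dy3 (Dt3 f) = Dt3 (Dy3 f) := by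
  funext t x y
  have h1 := (hf.st.hy' t x y).deriv
  have h2 := (hf.sy.ht' t x y).deriv
  rw [hf.et] at h1
  rw [hf.ey] at h2
  exact h1.trans ((Sm3.symm hf _ _ _).trans h2.symm)

theorem Sm3.comm_x {f : ℝ → ℝ → ℝ → ℝ} (hf : Sm3 f) : Dy3 (Dx3 f) = Dx3 (Dy3 f) := by
  funext t x y
  have h1 := (hf.sx.hy' t x y).deriv
  have h2 := (hf.sy.hx' t x y).deriv
  rw [hf.ex] at h1
  rw [hf.ey] at h2
  exact h1.trans ((Sm3.symm hf _ _ _).trans h2.symm)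

/-- Boundary part of Lemma 3.1: for the linearized Prandtl-type
equation with Robin boundary condition `∂_y u = βu` at `y = 0`, with
`w := ∂_y(u/∂_y ub)`, one has at `y = 0`:
(i) `w = (u/∂_y ub)(β − η)`, and
(ii) `∂ₜw + ∂ₓ(ub·w) − (β − η)(∂_y w + 2ηw + f̃) + ζw + (ζ̃/(β−η))w = 0`. -/
theorem linearized_prandtl_boundary_equation
    (β : ℝ) (hβ : 0 < β)
    (u v ub vb f : ℝ → ℝ → ℝ → ℝ)
    (hsm_u : ContDiff ℝ (⊤ : ℕ∞) (fun p : ℝ × ℝ × ℝ => u p.1 p.2.1 p.2.2))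
    (hsm_v : ContDiff ℝ (⊤ : ℕ∞) (fun p : ℝ × ℝ × ℝ => v p.1 p.2.1 p.2.2))
    (hsm_ub : ContDiff ℝ (⊤ : ℕ∞) (fun p : ℝ × ℝ × ℝ => ub p.1 p.2.1 p.2.2))
    (hsm_vb : ContDiff ℝ (⊤ : ℕ∞) (fun p : ℝ × ℝ × ℝ => vb p.1 p.2.1 p.2.2))
    (hsm_f : ContDiff ℝ (⊤ : ℕ∞) (fun p : ℝ × ℝ × ℝ => f p.1 p.2.1 p.2.2))
    (hmono : ∀ t x y : ℝ, 0 < Dy3 ub t x y)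
    (heq : ∀ t x y : ℝ,
      Dt3 u t x y + ub t x y * Dx3 u t x y + vb t x y * Dy3 u t x y
        + u t x y * Dx3 ub t x y + v t x y * Dy3 ub t x y - Dy3 (Dy3 u) t x y = f t x y)
    (w η ft ζ zt : ℝ → ℝ → ℝ → ℝ)
    (hw : ∀ t x y : ℝ, w t x y = Dy3 (fun a b c => u a b c / Dy3 ub a b c) t x y)
    (hη : ∀ t x y : ℝ, η t x y = Dy3 (Dy3 ub) t x y / Dy3 ub t x y)
    (hft : ∀ t x y : ℝ, ft t x y = f t x y / Dy3 ub t x y)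
    (hζ : ∀ t x y : ℝ, ζ t x y =
      (Dt3 (Dy3 ub) t x y + ub t x y * Dx3 (Dy3 ub) t x y
        + vb t x y * Dy3 (Dy3 ub) t x y - Dy3 (Dy3 (Dy3 ub)) t x y) / Dy3 ub t x y)
    (hzt : ∀ t x y : ℝ, zt t x y =
      (Dy3 (Dy3 (Dt3 ub)) t x y + ub t x y * Dy3 (Dy3 (Dx3 ub)) t x y
        - η t x y * (Dy3 (Dt3 ub) t x y + ub t x y * Dy3 (Dx3 ub) t x y)) / Dy3 ub t x y)
    (hvbc : ∀ t x : ℝ, v t x 0 = 0)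
    (hvbbc : ∀ t x : ℝ, vb t x 0 = 0)
    (hrobin : ∀ t x : ℝ, Dy3 u t x 0 = β * u t x 0)
    (hηbc : ∀ t x : ℝ, 0 < β - η t x 0) :
    (∀ t x : ℝ, w t x 0 = (u t x 0 / Dy3 ub t x 0) * (β - η t x 0)) ∧
    (∀ t x : ℝ,
      Dt3 w t x 0 + Dx3 (fun a b c => ub a b c * w a b c) t x 0
        - (β - η t x 0) * (Dy3 w t x 0 + 2 * η t x 0 * w t x 0 + ft t x 0)
        + ζ t x 0 * w t x 0 + (zt t x 0 / (β - η t x 0)) * w t x 0 = 0) := by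
  have su : Sm3 u := hsm_u
  have sb : Sm3 ub := hsm_ub
  have sg := sb.sy
  have sgy := sg.sy
  have hne : ∀ t x y, Dy3 ub t x y ≠ 0 := fun t x y => (hmono t x y).ne'
  have hw2 : ∀ t x y, w t x y =
      (Dy3 u t x y * Dy3 ub t x y - u t x y * Dy3 (Dy3 ub) t x y) / Dy3 ub t x y ^ 2 := by
    intro t x y
    rw [hw]
    exact ((su.hy t x y).div (sg.hy t x y) (hne t x y)).deriv
  have hi : ∀ t x : ℝ, w t x 0 = (u t x 0 / Dy3 ub t x 0) * (β - η t x 0) := by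
    intro t x
    have := hne t x 0
    rw [hw2, hη, hrobin]
    field_simp
  refine ⟨hi, fun t x => ?_⟩
  have hg := hne t x 0
  have hwt : HasDerivAt (fun τ => w τ x 0) _ t :=
    (((su.ht t x 0).div (sg.ht t x 0) hg).mul
      (((sgy.ht t x 0).div (sg.ht t x 0) hg).const_sub β)).congr_of_eventuallyEq
      (Filter.Eventually.of_forall fun τ => by simp only [hi, hη]; rfl)
  have hwx : HasDerivAt (fun τ => w t τ 0) _ x :=
    (((su.hx t x 0).div (sg.hx t x 0) hg).mul
      (((sgy.hx t x 0).div (sg.hx t x 0) hg).const_sub β)).congr_of_eventuallyEq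
      (Filter.Eventually.of_forall fun τ => by simp only [hi, hη]; rfl)
  have hwy : HasDerivAt (fun z => w t x z) _ 0 :=
    ((((su.sy.hy t x 0).mul (sg.hy t x 0)).sub ((su.hy t x 0).mul (sgy.hy t x 0))).div
      ((sg.hy t x 0).pow 2) (pow_ne_zero 2 hg)).congr_of_eventuallyEq
      (Filter.Eventually.of_forall fun τ => by simp only [hw2]; rfl)
  have e1 := hwt.deriv
  have e2 := ((sb.hx t x 0).mul hwx).deriv
  have e3 := hwy.deriv
  change Dt3 w t x 0 = _ at e1
  change Dx3 (fun a b c => ub a b c * w a b c) t x 0 = _ at e2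
  change Dy3 w t x 0 = _ at e3
  have hq := heq t x 0
  have hb := hηbc t x
  have hz : zt t x 0 / (β - η t x 0) * w t x 0 = zt t x 0 * (u t x 0 / Dy3 ub t x 0) := by
    rw [hi]; field_simp
  rw [hz, e1, e2, e3, hzt, hζ, hft, hi, ← hq, hη, sb.comm_t, sb.comm_x, sg.comm_t, sg.comm_x]
  simp only [hvbc, hvbbc, hrobin, Pi.div_apply, Pi.mul_apply, Pi.sub_apply, Pi.pow_apply]
  field_simp
  ring
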